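/- arXiv:2601.15258 — 3 statements merged into one kernel-verified Lean document; each statement's English description precedes it below -/
import Mathlib

section
/- In the max-variant with k = 2 facilities, for every odd m ≥ 3 and every ε ∈ (0, 1/m], the mechanism M_m((m−1)/(2m), (m+1)/(2m), (m+1)/(2m) + ε), which opens the facilities at the median representative location and the representative location directly to its right, has approximation ratio at most 4m²/(m²−1), and in particular at most 9/2, on every instance with m groups. -/
open Finset

noncomputable section

/-- A distributed facility location setting for `k` facilities and `m` groups:
`n ≥ 2` agents on the real line, partitioned into `m ≥ k` disjoint nonempty groups. -/
structure FLSetting (k m : ℕ) where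
  n : ℕ
  hn : 2 ≤ n
  hmk : k ≤ m
  grp : Fin n → Fin m
  surj : Function.Surjective grp

/-- A two-phase mechanism for `k` facilities: for each number `m` of groups, a
representative function on finite multisets of reals, and a selection function
producing the `k` facility locations from the multiset of representatives. -/
structure TwoPhase (k : ℕ) where
  rep : ℕ → Multiset ℝ → ℝ
  sel : ℕ → Multiset ℝ → Fin k → ℝ

/-- Validity of a two-phase mechanism: the representative of a nonempty multiset
is one of its elements, and the selected facility locations form a sub-multiset
of the representatives. -/
def TwoPhase.Valid {k : ℕ} (M : TwoPhase k) : Prop :=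
  (∀ (m : ℕ) (S : Multiset ℝ), S ≠ 0 → M.rep m S ∈ S) ∧
  (∀ (m : ℕ) (R : Multiset ℝ), Multiset.card R = m → k ≤ m →
    (↑(List.ofFn (M.sel m R)) : Multiset ℝ) ≤ R)

/-- The multiset of (reported) positions of the agents in group `j`. -/
def groupMS {k m : ℕ} (S : FLSetting k m) (x : Fin S.n → ℝ) (j : Fin m) : Multiset ℝ :=
  (Finset.univ.filter (fun i => S.grp i = j)).val.map x

/-- The number of agents in group `j`. -/
def groupSize {k m : ℕ} (S : FLSetting k m) (j : Fin m) : ℕ :=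
  (Finset.univ.filter (fun i => S.grp i = j)).card

/-- The multiset of the `m` group representatives. -/
def repsMS {k m : ℕ} (M : TwoPhase k) (S : FLSetting k m) (x : Fin S.n → ℝ) : Multiset ℝ :=
  (Finset.univ.val.map fun j : Fin m => M.rep m (groupMS S x j))

/-- The facility locations output by mechanism `M` on reported positions `x`. -/
def outcome {k m : ℕ} (M : TwoPhase k) (S : FLSetting k m) (x : Fin S.n → ℝ) : Fin k → ℝ :=
  M.sel m (repsMS M S x)

/-- Sum-variant individual cost: total distance to all facilities. -/
def sumCost (k : ℕ) (xi : ℝ) (y : Fin k → ℝ) : ℝ := ∑ ℓ, |xi - y ℓ|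

/-- Max-variant individual cost: distance to the farthest facility. -/
def maxCost (k : ℕ) (xi : ℝ) (y : Fin k → ℝ) : ℝ := ⨆ ℓ, |xi - y ℓ|

/-- Social cost: average over groups of the average individual cost within the group. -/
def SC {k m : ℕ} (cost : ℝ → (Fin k → ℝ) → ℝ) (S : FLSetting k m) (x : Fin S.n → ℝ)
    (y : Fin k → ℝ) : ℝ :=
  (1 / (m : ℝ)) * ∑ j : Fin m,
    (1 / (groupSize S j : ℝ)) *
      ∑ i ∈ Finset.univ.filter (fun i => S.grp i = j), cost (x i) y

/-- A feasible solution opens the `k` facilities at the positions of `k` distinct agents. -/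
def Feasible {k m : ℕ} (S : FLSetting k m) (x : Fin S.n → ℝ) (y : Fin k → ℝ) : Prop :=
  ∃ f : Fin k → Fin S.n, Function.Injective f ∧ ∀ ℓ, y ℓ = x (f ℓ)

/-- Strategyproofness with respect to an individual cost function. -/
def Strategyproof {k : ℕ} (cost : ℝ → (Fin k → ℝ) → ℝ) (M : TwoPhase k) : Prop :=
  ∀ (m : ℕ) (S : FLSetting k m) (x : Fin S.n → ℝ) (i : Fin S.n) (x' : ℝ),
    cost (x i) (outcome M S x) ≤ cost (x i) (outcome M S (Function.update x i x'))

/-- Strategyproofness restricted to instances with exactly `m` groups. -/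
def StrategyproofOn {k : ℕ} (cost : ℝ → (Fin k → ℝ) → ℝ) (M : TwoPhase k) (m : ℕ) : Prop :=
  ∀ (S : FLSetting k m) (x : Fin S.n → ℝ) (i : Fin S.n) (x' : ℝ),
    cost (x i) (outcome M S x) ≤ cost (x i) (outcome M S (Function.update x i x'))

/-- The `t`-th leftmost element of a multiset of reals (1-indexed). -/
def kthLeftmost (S : Multiset ℝ) (t : ℕ) : ℝ := (S.sort (· ≤ ·)).getD (t - 1) 0

/-- The mechanism `M_m(θ, ℓ, r)` for two facilities: each group's representative is the
position of its `⌈θ·n_g⌉`-th leftmost agent, and the facilities are opened at the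
`⌈ℓm⌉`-th and `⌈rm⌉`-th leftmost representative locations. -/
def Mmech (θ l r : ℝ) : TwoPhase 2 where
  rep := fun _ S => kthLeftmost S ⌈θ * (Multiset.card S : ℝ)⌉₊
  sel := fun m R => ![kthLeftmost R ⌈l * (m : ℝ)⌉₊, kthLeftmost R ⌈r * (m : ℝ)⌉₊]

/-- At least `t` elements of a multiset are at most its `t`-th leftmost element. -/
lemma le_countP_le_kthLeftmost (S : Multiset ℝ) (t : ℕ) (h1 : 1 ≤ t) (h2 : t ≤ S.card) :
    t ≤ S.countP (· ≤ kthLeftmost S t) := by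
  have hlen : (S.sort (· ≤ ·)).length = S.card := S.length_sort _
  have hsorted := (S.pairwise_sort (· ≤ ·)).sortedLE
  suffices h : t ≤ (S.sort (· ≤ ·)).countP (fun a => decide (a ≤ kthLeftmost S t)) by
    rwa [← Multiset.coe_countP, S.sort_eq] at h
  have hlt : t - 1 < (S.sort (· ≤ ·)).length := by omega
  unfold kthLeftmost
  rw [List.getD_eq_getElem _ _ hlt]
  generalize S.sort (· ≤ ·) = L at hlen hsorted hlt
  calc t = (L.take t).length := by simp [hlen, h2]
    _ = (L.take t).countP (fun a => decide (a ≤ L[t - 1])) := by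
        symm
        rw [List.countP_eq_length]
        intro a ha
        obtain ⟨i, hi, rfl⟩ := List.getElem_of_mem ha
        rw [List.length_take] at hi
        simp only [List.getElem_take, decide_eq_true_eq]
        exact hsorted.getElem_le_getElem_of_le (by omega)
    _ ≤ _ := (List.take_sublist t L).countP_le

/-- All but `t - 1` elements of a multiset are at least its `t`-th leftmost element. -/
lemma card_lt_countP_ge_kthLeftmost_add (S : Multiset ℝ) (t : ℕ) (h1 : 1 ≤ t)
    (h2 : t ≤ S.card) :
    S.card < S.countP (kthLeftmost S t ≤ ·) + t := by
  have hlen : (S.sort (· ≤ ·)).length = S.card := S.length_sort _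
  have hsorted := (S.pairwise_sort (· ≤ ·)).sortedLE
  suffices h : S.card < (S.sort (· ≤ ·)).countP (fun a => decide (kthLeftmost S t ≤ a)) + t by
    rwa [← Multiset.coe_countP, S.sort_eq] at h
  have hlt : t - 1 < (S.sort (· ≤ ·)).length := by omega
  unfold kthLeftmost
  rw [List.getD_eq_getElem _ _ hlt]
  generalize S.sort (· ≤ ·) = L at hlen hsorted hlt
  have hdrop : (L.drop (t - 1)).length = S.card - (t - 1) := by simp [hlen]
  have hcount : (L.drop (t - 1)).length ≤ L.countP (fun a => decide (L[t - 1] ≤ a)) := by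
    calc (L.drop (t - 1)).length
        = (L.drop (t - 1)).countP (fun a => decide (L[t - 1] ≤ a)) := by
          symm
          rw [List.countP_eq_length]
          intro a ha
          obtain ⟨i, hi, rfl⟩ := List.getElem_of_mem ha
          simp only [List.getElem_drop, decide_eq_true_eq]
          exact hsorted.getElem_le_getElem_of_le (by omega)
      _ ≤ _ := (List.drop_sublist (t - 1) L).countP_le
  omega

/-- The `t`-th leftmost element is monotone in `t`. -/
lemma kthLeftmost_mono (S : Multiset ℝ) {s t : ℕ} (hst : s ≤ t) (h1 : 1 ≤ t)
    (h2 : t ≤ S.card) : kthLeftmost S s ≤ kthLeftmost S t := by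
  have hlen : (S.sort (· ≤ ·)).length = S.card := S.length_sort _
  unfold kthLeftmost
  rw [List.getD_eq_getElem _ _ (by omega), List.getD_eq_getElem _ _ (by omega)]
  exact (S.pairwise_sort (· ≤ ·)).sortedLE.getElem_le_getElem_of_le (by omega)

lemma le_card_filter_le_kthLeftmost {ι : Type*} (s : Finset ι) (f : ι → ℝ) (t : ℕ)
    (h1 : 1 ≤ t) (h2 : t ≤ s.card) :
    t ≤ (s.filter (fun i => f i ≤ kthLeftmost (s.val.map f) t)).card := by
  have h := le_countP_le_kthLeftmost (s.val.map f) t h1 (by simpa using h2)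
  rwa [Multiset.countP_map] at h

lemma card_lt_card_filter_kthLeftmost_le_add {ι : Type*} (s : Finset ι) (f : ι → ℝ) (t : ℕ)
    (h1 : 1 ≤ t) (h2 : t ≤ s.card) :
    s.card < (s.filter (fun i => kthLeftmost (s.val.map f) t ≤ f i)).card + t := by
  have h := card_lt_countP_ge_kthLeftmost_add (s.val.map f) t h1 (by simpa using h2)
  rw [Multiset.countP_map, Multiset.card_map] at h
  exact h

lemma maxCost_two_le (a : ℝ) (y : Fin 2 → ℝ) :
    maxCost 2 a y ≤ max |a - y 0| |a - y 1| := by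
  refine ciSup_le fun l => ?_
  fin_cases l
  · exact le_max_left _ _
  · exact le_max_right _ _

lemma abs_sub_le_maxCost {k : ℕ} (a : ℝ) (y : Fin k → ℝ) (l : Fin k) :
    |a - y l| ≤ maxCost k a y :=
  le_ciSup (f := fun l => |a - y l|) (Set.finite_range _).bddAbove l

/-- Comparison of the max-cost of an agent at `x` for facilities `w₁ ≤ w₂` with its distance
to an arbitrary point `c`. -/
lemma max_abs_sub_le {x w₁ w₂ c α : ℝ} (hw : w₁ ≤ w₂) (hα : 1 ≤ α) :
    max |x - w₁| |x - w₂| ≤ α * |x - c| + (max 0 (c - w₁) + max 0 (w₂ - c))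
      - α * max 0 (w₂ - c) * (if w₂ ≤ x then 1 else 0)
      - α * max 0 (c - w₁) * (if x ≤ w₁ then 1 else 0) := by
  have hu := le_max_right 0 (c - w₁)
  have hv := le_max_right 0 (w₂ - c)
  have hu0 := le_max_left 0 (c - w₁)
  have hv0 := le_max_left 0 (w₂ - c)
  have h1 := le_abs_self (x - c)
  have h2 := neg_le_abs (x - c)
  have hright : w₂ ≤ x → max 0 (w₂ - c) ≤ |x - c| := fun h =>
    max_le (abs_nonneg _) (by linarith)
  have hleft : x ≤ w₁ → max 0 (c - w₁) ≤ |x - c| := fun h =>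
    max_le (abs_nonneg _) (by linarith)
  have hboth : w₂ ≤ x → x ≤ w₁ → max 0 (c - w₁) + max 0 (w₂ - c) ≤ |x - c| := fun h h' => by
    rcases le_total c w₁ with hc | hc
    · rw [max_eq_left (sub_nonpos.2 hc), zero_add]; exact hright h
    · rw [max_eq_left (by linarith : w₂ - c ≤ 0), add_zero]; exact hleft h'
  generalize max 0 (c - w₁) = u at *
  generalize max 0 (w₂ - c) = v at *
  generalize |x - c| = d at *
  have key : ∀ e, e ≤ d → (α - 1) * e ≤ (α - 1) * d := fun e he =>
    mul_le_mul_of_nonneg_left he (by linarith)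
  have hd := key 0 (by linarith)
  split_ifs with hR hL hL
  · have := key _ (hboth hR hL)
    have := hboth hR hL
    apply max_le <;> rw [abs_le] <;> constructor <;> linarith
  · have := key _ (hright hR)
    apply max_le <;> rw [abs_le] <;> constructor <;> linarith
  · have := key _ (hleft hL)
    apply max_le <;> rw [abs_le] <;> constructor <;> linarith
  · apply max_le <;> rw [abs_le] <;> constructor <;> linarith

/-- The social cost functional: the average over groups of the group averages of `f`. -/
def groupAvg {k m : ℕ} (S : FLSetting k m) (f : Fin S.n → ℝ) : ℝ :=
  (1 / (m : ℝ)) * ∑ j : Fin m,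
    (1 / (groupSize S j : ℝ)) * ∑ i ∈ Finset.univ.filter (fun i => S.grp i = j), f i

lemma SC_eq_groupAvg {k m : ℕ} (cost : ℝ → (Fin k → ℝ) → ℝ) (S : FLSetting k m)
    (x : Fin S.n → ℝ) (y : Fin k → ℝ) :
    SC cost S x y = groupAvg S (fun i => cost (x i) y) := rfl

lemma groupSize_pos {k m : ℕ} (S : FLSetting k m) (j : Fin m) : 0 < groupSize S j := by
  obtain ⟨i, hi⟩ := S.surj j
  exact Finset.card_pos.2 ⟨i, by simp [hi]⟩

lemma groupAvg_mono {k m : ℕ} (S : FLSetting k m) {f g : Fin S.n → ℝ} (h : ∀ i, f i ≤ g i) :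
    groupAvg S f ≤ groupAvg S g := by
  unfold groupAvg
  gcongr
  exact h _

lemma groupAvg_add {k m : ℕ} (S : FLSetting k m) (f g : Fin S.n → ℝ) :
    groupAvg S (fun i => f i + g i) = groupAvg S f + groupAvg S g := by
  simp only [groupAvg, Finset.sum_add_distrib, mul_add]

lemma groupAvg_const_mul {k m : ℕ} (S : FLSetting k m) (a : ℝ) (f : Fin S.n → ℝ) :
    groupAvg S (fun i => a * f i) = a * groupAvg S f := by
  simp only [groupAvg, ← Finset.mul_sum, mul_left_comm _ a]

lemma groupAvg_const {k m : ℕ} (hm : 0 < m) (S : FLSetting k m) (a : ℝ) :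
    groupAvg S (fun _ => a) = a := by
  have hm' : (m : ℝ) ≠ 0 := by positivity
  have h : ∀ j : Fin m, (1 / (groupSize S j : ℝ)) *
      ∑ _i ∈ Finset.univ.filter (fun i => S.grp i = j), a = a := by
    intro j
    have hj : (groupSize S j : ℝ) ≠ 0 := by exact_mod_cast (groupSize_pos S j).ne'
    rw [Finset.sum_const, nsmul_eq_mul]
    change 1 / (groupSize S j : ℝ) * ((groupSize S j : ℝ) * a) = a
    field_simp
  simp only [groupAvg, h]
  simp
  field_simp

/-- If a `q`-fraction of the agents satisfies `P` in each of at least `N` groups, then the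
weight of the agents satisfying `P` is at least `q * N / m`. -/
lemma le_groupAvg_indicator {k m : ℕ} (S : FLSetting k m) (P : Fin S.n → Prop)
    [DecidablePred P] (q : ℝ) (hq : 0 ≤ q) (J : Finset (Fin m)) (N : ℕ) (hN : N ≤ J.card)
    (hJ : ∀ j ∈ J, q * groupSize S j ≤
      ((Finset.univ.filter (fun i => S.grp i = j)).filter P).card) :
    q * N / m ≤ groupAvg S (fun i => if P i then 1 else 0) := by
  have hsum : q * N ≤ ∑ j : Fin m, (1 / (groupSize S j : ℝ)) *
      ∑ i ∈ Finset.univ.filter (fun i => S.grp i = j), (if P i then (1 : ℝ) else 0) := by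
    calc q * N ≤ q * J.card := by gcongr
      _ = ∑ j ∈ J, q := by simp [mul_comm]
      _ ≤ ∑ j ∈ J, (1 / (groupSize S j : ℝ)) *
          ∑ i ∈ Finset.univ.filter (fun i => S.grp i = j), (if P i then (1 : ℝ) else 0) := by
          refine Finset.sum_le_sum fun j hj => ?_
          have hpos : (0 : ℝ) < groupSize S j := by exact_mod_cast groupSize_pos S j
          rw [Finset.sum_boole, one_div, inv_mul_eq_div, le_div_iff₀ hpos]
          exact hJ j hj
      _ ≤ _ := by
          refine Finset.sum_le_sum_of_subset_of_nonneg (Finset.subset_univ _) fun j _ _ => ?_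
          have : 0 ≤ ∑ i ∈ Finset.univ.filter (fun i => S.grp i = j),
              (if P i then (1 : ℝ) else 0) :=
            Finset.sum_nonneg fun i _ => by split_ifs <;> norm_num
          positivity
  unfold groupAvg
  rw [div_eq_mul_inv, mul_comm, ← one_div]
  gcongr

/-- If the agents weakly to the left of `w₁` and those weakly to the right of `w₂` each have
weight at least `1 / α`, then opening the facilities at `w₁ ≤ w₂` is an `α`-approximation. -/
lemma SC_le_mul_SC_of_weights {m : ℕ} (hm : 0 < m) (S : FLSetting 2 m) (x : Fin S.n → ℝ)
    (w y : Fin 2 → ℝ) (hw : w 0 ≤ w 1) {α : ℝ} (hα : 1 ≤ α)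
    (hR : 1 ≤ α * groupAvg S (fun i => if w 1 ≤ x i then 1 else 0))
    (hL : 1 ≤ α * groupAvg S (fun i => if x i ≤ w 0 then 1 else 0)) :
    SC (maxCost 2) S x w ≤ α * SC (maxCost 2) S x y := by
  set u := max 0 (y 0 - w 0)
  set v := max 0 (w 1 - y 0)
  have hu : 0 ≤ u := le_max_left _ _
  have hv : 0 ≤ v := le_max_left _ _
  have hpt := groupAvg_mono S (f := fun i => maxCost 2 (x i) w)
    (g := fun i => α * maxCost 2 (x i) y + ((u + v)
      + (-(α * v) * (if w 1 ≤ x i then 1 else 0) + -(α * u) * (if x i ≤ w 0 then 1 else 0))))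
    (fun i => by
      have h1 := maxCost_two_le (x i) w
      have h2 := max_abs_sub_le (x := x i) (c := y 0) hw hα
      have h3 := mul_le_mul_of_nonneg_left (abs_sub_le_maxCost (x i) y 0)
        (by linarith : 0 ≤ α)
      linarith)
  rw [groupAvg_add, groupAvg_add S (fun _ => u + v), groupAvg_const hm, groupAvg_add,
    groupAvg_const_mul, groupAvg_const_mul, groupAvg_const_mul] at hpt
  rw [SC_eq_groupAvg, SC_eq_groupAvg]
  linarith [mul_le_mul_of_nonneg_left hR hv, mul_le_mul_of_nonneg_left hL hu]

/-- In the max-variant with two facilities, for every odd `m ≥ 3` and `ε ∈ (0, 1/m]`,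
the mechanism `M_m((m−1)/(2m), (m+1)/(2m), (m+1)/(2m)+ε)` has approximation ratio at most
`4m²/(m²−1)`, and in particular at most `9/2`. -/
theorem stmt10 (m : ℕ) (hm : 3 ≤ m) (hmodd : Odd m) (ε : ℝ)
    (hε : ε ∈ Set.Ioc (0 : ℝ) (1 / (m : ℝ)))
    (S : FLSetting 2 m) (x : Fin S.n → ℝ) (y : Fin 2 → ℝ) (hy : Feasible S x y) :
    SC (maxCost 2) S x
        (outcome (Mmech (((m : ℝ) - 1) / (2 * m)) (((m : ℝ) + 1) / (2 * m))
          (((m : ℝ) + 1) / (2 * m) + ε)) S x)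
      ≤ (4 * (m : ℝ) ^ 2 / ((m : ℝ) ^ 2 - 1)) * SC (maxCost 2) S x y ∧
    SC (maxCost 2) S x
        (outcome (Mmech (((m : ℝ) - 1) / (2 * m)) (((m : ℝ) + 1) / (2 * m))
          (((m : ℝ) + 1) / (2 * m) + ε)) S x)
      ≤ (9 / 2) * SC (maxCost 2) S x y := by
  obtain ⟨p, hmdef⟩ := hmodd
  have hp : 1 ≤ p := by omega
  have hpR : (1 : ℝ) ≤ p := by exact_mod_cast hp
  obtain ⟨hε0, hε1⟩ := hε
  have hmR : (m : ℝ) = 2 * p + 1 := by rw [hmdef]; push_cast; ring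
  have hm0 : (0 : ℝ) < m := by rw [hmR]; positivity
  set θ := ((m : ℝ) - 1) / (2 * m) with hθdef
  set l := ((m : ℝ) + 1) / (2 * m) with hldef
  have hθ : θ = p / m := by rw [hθdef, hmR]; field_simp; ring
  have hl : ⌈l * (m : ℝ)⌉₊ = p + 1 := by
    have : l * (m : ℝ) = ((p + 1 : ℕ) : ℝ) := by
      rw [hldef, hmR]; push_cast; field_simp; ring
    rw [this, Nat.ceil_natCast]
  have hr : ⌈(l + ε) * (m : ℝ)⌉₊ = p + 2 := by
    have h1 : (l + ε) * (m : ℝ) = (p + 1) + ε * m := by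
      have : l * (m : ℝ) = p + 1 := by
        rw [hldef, hmR]; field_simp; ring
      rw [add_mul, this]
    have h2 : ε * m ≤ 1 := by rwa [le_div_iff₀ hm0] at hε1
    have h3 : 0 < ε * m := by positivity
    rw [h1, Nat.ceil_eq_iff (by omega)]
    push_cast [Nat.add_sub_assoc]
    constructor <;> linarith
  set M := Mmech θ l (l + ε)
  set rep : Fin m → ℝ := fun j => M.rep m (groupMS S x j)
  have hw0 : outcome M S x 0 = kthLeftmost (Finset.univ.val.map rep) (p + 1) := by
    rw [← hl]; rfl
  have hw1 : outcome M S x 1 = kthLeftmost (Finset.univ.val.map rep) (p + 2) := by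
    rw [← hr]; rfl
  set w := outcome M S x
  have hcard : (Finset.univ : Finset (Fin m)).card = m := by simp
  have hw : w 0 ≤ w 1 := by
    rw [hw0, hw1]
    exact kthLeftmost_mono _ (by omega) (by omega)
      (by rw [Multiset.card_map, Finset.card_val, hcard]; omega)
  have hgrp : ∀ j, rep j = kthLeftmost
      ((Finset.univ.filter (fun i => S.grp i = j)).val.map x) ⌈θ * (groupSize S j : ℝ)⌉₊ := by
    intro j
    have : (groupMS S x j).card = groupSize S j := Multiset.card_map _ _
    change kthLeftmost (groupMS S x j) ⌈θ * ((groupMS S x j).card : ℝ)⌉₊ = _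
    rw [this]; rfl
  have hθ0 : 0 < θ := by rw [hθ]; positivity
  have hθ1 : θ ≤ 1 := by rw [hθ, div_le_one hm0, hmR]; linarith
  have ht : ∀ j, 1 ≤ ⌈θ * (groupSize S j : ℝ)⌉₊ ∧
      ⌈θ * (groupSize S j : ℝ)⌉₊ ≤ groupSize S j := by
    intro j
    have hj : (0 : ℝ) < groupSize S j := by exact_mod_cast groupSize_pos S j
    exact ⟨Nat.ceil_pos.2 (by positivity), Nat.ceil_le.2 (by nlinarith)⟩
  have hleft := le_groupAvg_indicator S (fun i => x i ≤ w 0) θ hθ0.le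
    (Finset.univ.filter fun j => rep j ≤ w 0) (p + 1)
    (by
      rw [hw0]
      exact le_card_filter_le_kthLeftmost _ rep (p + 1) (by omega) (by omega))
    (fun j hj => by
      have hj' : rep j ≤ w 0 := (Finset.mem_filter.1 hj).2
      have h := le_card_filter_le_kthLeftmost (Finset.univ.filter (fun i => S.grp i = j)) x
        _ (ht j).1 (ht j).2
      rw [← hgrp] at h
      refine (Nat.le_ceil _).trans ?_
      exact_mod_cast h.trans (Finset.card_le_card
        (Finset.monotone_filter_right _ fun i _ hi => le_trans hi hj')))
  have hright := le_groupAvg_indicator S (fun i => w 1 ≤ x i) (1 - θ) (by linarith)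
    (Finset.univ.filter fun j => w 1 ≤ rep j) p
    (by
      have h := card_lt_card_filter_kthLeftmost_le_add Finset.univ rep (p + 2) (by omega)
        (by omega)
      rw [← hw1] at h
      omega)
    (fun j hj => by
      have hj' : w 1 ≤ rep j := (Finset.mem_filter.1 hj).2
      have h := card_lt_card_filter_kthLeftmost_le_add
        (Finset.univ.filter (fun i => S.grp i = j)) x _ (ht j).1 (ht j).2
      rw [← hgrp] at h
      have hsub := Finset.card_le_card (Finset.monotone_filter_right
        (Finset.univ.filter (fun i => S.grp i = j))
        fun i _ (hi : rep j ≤ x i) => (le_trans hj' hi : w 1 ≤ x i))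
      have hlt : groupSize S j + 1 ≤ ((Finset.univ.filter (fun i => S.grp i = j)).filter
          (fun i => w 1 ≤ x i)).card + ⌈θ * (groupSize S j : ℝ)⌉₊ :=
        (Nat.succ_le_of_lt h).trans (by gcongr)
      have hltR : (groupSize S j : ℝ) + 1 ≤ ((Finset.univ.filter
          (fun i => S.grp i = j)).filter (fun i => w 1 ≤ x i)).card
          + (⌈θ * (groupSize S j : ℝ)⌉₊ : ℝ) := by exact_mod_cast hlt
      have hceil := Nat.ceil_lt_add_one
        (by positivity : 0 ≤ θ * (groupSize S j : ℝ))
      linarith)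
  set α := 4 * (m : ℝ) ^ 2 / ((m : ℝ) ^ 2 - 1) with hαdef
  have hden : (0 : ℝ) < (m : ℝ) ^ 2 - 1 := by rw [hmR]; nlinarith
  have hα1 : 1 ≤ α := by rw [hαdef, le_div_iff₀ hden]; nlinarith
  have hα9 : α ≤ 9 / 2 := by
    rw [hαdef, div_le_iff₀ hden, hmR]; nlinarith
  have hα : α * ((p : ℝ) * (p + 1) / m ^ 2) = 1 := by
    rw [hαdef]
    have : (p : ℝ) * (p + 1) = ((m : ℝ) ^ 2 - 1) / 4 := by rw [hmR]; ring
    rw [this]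
    field_simp
  have hmain : SC (maxCost 2) S x w ≤ α * SC (maxCost 2) S x y := by
    refine SC_le_mul_SC_of_weights (by omega) S x w y hw hα1 ?_ ?_
    · refine hα.ge.trans ?_
      refine mul_le_mul_of_nonneg_left (le_trans (le_of_eq ?_) hright) (by linarith)
      rw [hθ, hmR]; field_simp; ring
    · refine hα.ge.trans ?_
      refine mul_le_mul_of_nonneg_left (le_trans (le_of_eq ?_) hleft) (by linarith)
      rw [hθ]; push_cast; field_simp
  have hnonneg : 0 ≤ SC (maxCost 2) S x y := by
    rw [SC_eq_groupAvg, ← groupAvg_const (by omega : 0 < m) S 0]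
    exact groupAvg_mono S fun i => (abs_nonneg _).trans (abs_sub_le_maxCost (x i) y 0)
  exact ⟨hmain, hmain.trans (mul_le_mul_of_nonneg_right hα9 hnonneg)⟩

end
end

section
/- The algorithm A*_max is not strategyproof in the max-variant with k = 2 facilities: there exists an instance (with m = 3 groups of two agents each) and an agent who, by misreporting her position, strictly decreases her individual cost measured at her true position. -/
open Finset

noncomputable section

/-- The algorithm `A✶_max` for two facilities: each group's representative is the position
of its `⌈n_g/2⌉`-th leftmost agent; one facility is opened at the `⌈m/2⌉`-th leftmost
representative location `w₁`, and the other at a representative location other than `w₁`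
that is closest to `w₁`. -/
def AmaxAlg : TwoPhase 2 where
  rep := fun _ S => kthLeftmost S ((Multiset.card S + 1) / 2)
  sel := fun m R =>
    let w1 := kthLeftmost R ((m + 1) / 2)
    ![w1, (((R.erase w1).sort (· ≤ ·)).argmin (fun z => |z - w1|)).getD 0]

lemma kthLeftmost_pair (a b : ℝ) : kthLeftmost {a, b} 1 = min a b := by
  wlog h : a ≤ b generalizing a b
  · rw [Multiset.pair_comm, min_comm, this b a (le_of_not_ge h)]
  have hs : ({a, b} : Multiset ℝ).sort (· ≤ ·) = [a, b] := by
    rw [Multiset.insert_eq_cons, Multiset.sort_cons _ _ _ (by simpa using h),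
      Multiset.sort_singleton]
  rw [kthLeftmost, hs, min_eq_left h]
  rfl

lemma kthLeftmost_triple {a b c : ℝ} (hab : a ≤ b) (hbc : b ≤ c) :
    kthLeftmost {a, b, c} 2 = b := by
  have hs : ({a, b, c} : Multiset ℝ).sort (· ≤ ·) = [a, b, c] := by
    rw [Multiset.insert_eq_cons, Multiset.insert_eq_cons,
      Multiset.sort_cons _ _ _ (by simpa using ⟨hab, hab.trans hbc⟩),
      Multiset.sort_cons _ _ _ (by simpa using hbc), Multiset.sort_singleton]
  rw [kthLeftmost, hs]
  rfl

/-- With three distinct representatives the second facility goes to the closer neighbour of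
the middle one, ties being broken to the left. -/
lemma AmaxAlg_sel_triple {a b c : ℝ} (hab : a < b) (hbc : b < c) :
    AmaxAlg.sel 3 {a, b, c} = ![b, if c - b < b - a then c else a] := by
  have he : ({a, b, c} : Multiset ℝ).erase b = a ::ₘ {c} := by
    rw [Multiset.insert_eq_cons, Multiset.insert_eq_cons,
      Multiset.erase_cons_tail _ hab.ne, Multiset.erase_cons_head]
  have hs : (a ::ₘ {c} : Multiset ℝ).sort (· ≤ ·) = [a, c] := by
    rw [Multiset.sort_cons _ _ _ (by simpa using (hab.trans hbc).le), Multiset.sort_singleton]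
  have h1 : |a - b| = b - a := by rw [abs_sub_comm, abs_of_pos (sub_pos.2 hab)]
  have h2 : |c - b| = c - b := abs_of_pos (sub_pos.2 hbc)
  have hk := kthLeftmost_triple hab.le hbc.le
  simp only [AmaxAlg, Nat.reduceAdd, Nat.reduceDiv, hk, he, hs]
  by_cases h : c - b < b - a <;> simp [List.argmin_cons, h1, h2, h]

lemma maxCost_two (p a b : ℝ) : maxCost 2 p ![a, b] = max |p - a| |p - b| := by
  refine le_antisymm (ciSup_le fun l => ?_) (max_le ?_ ?_)
  · fin_cases l <;> simp
  · exact le_ciSup (f := fun l : Fin 2 => |p - ![a, b] l|) (Set.finite_range _).bddAbove 0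
  · exact le_ciSup (f := fun l : Fin 2 => |p - ![a, b] l|) (Set.finite_range _).bddAbove 1

/-- Six agents in three groups of two consecutive agents each. -/
def pairsSetting : FLSetting 2 3 where
  n := 6
  hn := by norm_num
  hmk := by norm_num
  grp := ![0, 0, 1, 1, 2, 2]
  surj := by decide

lemma groupSize_pairsSetting (j : Fin 3) : groupSize pairsSetting j = 2 := by
  revert j
  decide

lemma groupMS_pairsSetting (x : Fin 6 → ℝ) (j : Fin 3) :
    groupMS pairsSetting x j =
      (![{x 0, x 1}, {x 2, x 3}, {x 4, x 5}] : Fin 3 → Multiset ℝ) j := by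
  fin_cases j <;> rfl

lemma outcome_pairsSetting (x : Fin 6 → ℝ) :
    outcome AmaxAlg pairsSetting x =
      AmaxAlg.sel 3 {min (x 0) (x 1), min (x 2) (x 3), min (x 4) (x 5)} := by
  have hr : repsMS AmaxAlg pairsSetting x =
      {kthLeftmost {x 0, x 1} 1, kthLeftmost {x 2, x 3} 1, kthLeftmost {x 4, x 5} 1} := by
    unfold repsMS
    simp only [groupMS_pairsSetting, AmaxAlg]
    simp [Fin.univ_succ]
  simp only [kthLeftmost_pair] at hr
  exact congrArg (AmaxAlg.sel 3) hr

/-- The algorithm `A✶_max` is not strategyproof in the max-variant with two facilities: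
on some instance with `m = 3` groups of two agents each, some agent strictly decreases
her individual cost (measured at her true position) by misreporting. -/
theorem stmt13 :
    ∃ (S : FLSetting 2 3) (x : Fin S.n → ℝ) (i : Fin S.n) (x' : ℝ),
      (∀ j : Fin 3, groupSize S j = 2) ∧
      maxCost 2 (x i) (outcome AmaxAlg S (Function.update x i x'))
        < maxCost 2 (x i) (outcome AmaxAlg S x) := by
  let x : Fin 6 → ℝ := ![0, 4, 2, 2, 5, 5]
  let xdev : Fin 6 → ℝ := ![0, -10, 2, 2, 5, 5]
  have hx : Function.update x 1 (-10) = xdev := by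
    ext i
    fin_cases i <;> rfl
  have truthful : outcome AmaxAlg pairsSetting x = ![2, 0] := by
    have h : outcome AmaxAlg pairsSetting x =
        AmaxAlg.sel 3 {min 0 4, min 2 2, min 5 5} := outcome_pairsSetting x
    rw [h, AmaxAlg_sel_triple (by norm_num) (by norm_num)]
    norm_num
  have deviating : outcome AmaxAlg pairsSetting xdev = ![2, 5] := by
    have h : outcome AmaxAlg pairsSetting xdev =
        AmaxAlg.sel 3 {min 0 (-10), min 2 2, min 5 5} := outcome_pairsSetting xdev
    rw [h, AmaxAlg_sel_triple (by norm_num) (by norm_num)]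
    norm_num
  refine ⟨pairsSetting, x, (1 : Fin 6), -10, groupSize_pairsSetting, ?_⟩
  change maxCost 2 4 (outcome AmaxAlg pairsSetting
      (Function.update x (1 : Fin 6) (-10) : Fin 6 → ℝ)) <
    maxCost 2 4 (outcome AmaxAlg pairsSetting x)
  rw [hx, truthful, deviating, maxCost_two, maxCost_two]
  norm_num

end
end

section
/- In the max-variant with k = 2 facilities, for every odd number m of groups, the algorithm A*_max has approximation ratio at most 7/2: on every instance with an odd number m of groups, its output has social cost at most 7/2 times the minimum social cost over all feasible solutions. -/
open Finset

noncomputable section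

/-- Splitting a multiset of reals around its `(t+1)`-st leftmost element. -/
lemma exists_split_kthLeftmost (R : Multiset ℝ) (t : ℕ) (ht : t < Multiset.card R) :
    ∃ A B : Multiset ℝ, R = A + kthLeftmost R (t + 1) ::ₘ B ∧ Multiset.card A = t ∧
      (∀ a ∈ A, a ≤ kthLeftmost R (t + 1)) ∧ (∀ b ∈ B, kthLeftmost R (t + 1) ≤ b) := by
  set l := R.sort (· ≤ ·) with hl
  have hlen : t < l.length := by simpa [hl] using ht
  have hk : kthLeftmost R (t + 1) = l[t] := by
    rw [kthLeftmost, ← hl, Nat.add_sub_cancel, List.getD_eq_getElem _ _ hlen]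
  have hdec : l = l.take t ++ l[t] :: l.drop (t + 1) := by
    rw [← List.drop_eq_getElem_cons hlen, List.take_append_drop]
  have hs : l.Pairwise (· ≤ ·) := Multiset.pairwise_sort R (· ≤ ·)
  rw [hdec, List.pairwise_append] at hs
  obtain ⟨-, hs2, hs3⟩ := hs
  rw [List.pairwise_cons] at hs2
  rw [hk]
  refine ⟨(l.take t : Multiset ℝ), (l.drop (t + 1) : Multiset ℝ), ?_, ?_, ?_, ?_⟩
  · rw [Multiset.cons_coe, Multiset.coe_add, ← hdec, hl, Multiset.sort_eq]
  · simp [hlen.le]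
  · intro a ha
    exact hs3 a ha _ List.mem_cons_self
  · intro b hb
    exact hs2.1 b hb

lemma sum_map_le_card_mul {α : Type*} (A : Multiset α) (F : α → ℝ) (P : ℝ)
    (h : ∀ a ∈ A, F a ≤ P) : (A.map F).sum ≤ Multiset.card A * P := by
  have := Multiset.sum_le_card_nsmul (A.map F) P (by simpa using h)
  simpa using this

/-- If `F` is at most `P` on one side of the median of `G`, and at most `Q ≥ P` everywhere, then
the average of `F` over `G` is at most that of `P` and `Q`. -/
lemma sum_map_le_of_median (G : Multiset ℝ) (hG : 0 < Multiset.card G) (F : ℝ → ℝ) (P Q : ℝ)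
    (hPQ : P ≤ Q) (hQ : ∀ z, F z ≤ Q)
    (hP : (∀ z ≤ kthLeftmost G ((Multiset.card G + 1) / 2), F z ≤ P) ∨
      (∀ z ≥ kthLeftmost G ((Multiset.card G + 1) / 2), F z ≤ P)) :
    (G.map F).sum ≤ Multiset.card G * ((P + Q) / 2) := by
  obtain ⟨t, ht⟩ : ∃ t, (Multiset.card G + 1) / 2 = t + 1 :=
    ⟨(Multiset.card G + 1) / 2 - 1, by omega⟩
  rw [ht] at hP
  obtain ⟨A, B, hR, hA, hAle, hBle⟩ := exists_split_kthLeftmost G t (by omega)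
  set r := kthLeftmost G (t + 1)
  have hcard : Multiset.card G = t + (Multiset.card B + 1) := by
    rw [hR, Multiset.card_add, Multiset.card_cons, hA]
  have hsum : (G.map F).sum = (A.map F).sum + (F r + (B.map F).sum) := by
    rw [hR, Multiset.map_add, Multiset.map_cons, Multiset.sum_add, Multiset.sum_cons]
  have hAQ := sum_map_le_card_mul A F Q fun a _ => hQ a
  have hBQ := sum_map_le_card_mul B F Q fun a _ => hQ a
  have hcard' : (Multiset.card G : ℝ) = t + (Multiset.card B + 1) := by exact_mod_cast hcard
  rw [hsum, hcard']
  rw [hA] at hAQ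
  rcases hP with hP | hP
  · have hAP := sum_map_le_card_mul A F P fun a ha => hP a (hAle a ha)
    rw [hA] at hAP
    have h1 : (Multiset.card B : ℝ) ≤ t + 1 := by exact_mod_cast (by omega)
    nlinarith [hP r le_rfl, mul_nonneg (sub_nonneg.2 h1) (sub_nonneg.2 hPQ)]
  · have hBP := sum_map_le_card_mul B F P fun a ha => hP a (hBle a ha)
    have h1 : (t : ℝ) ≤ Multiset.card B + 1 := by exact_mod_cast (by omega)
    nlinarith [hP r le_rfl, mul_nonneg (sub_nonneg.2 h1) (sub_nonneg.2 hPQ)]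

/-- Comparison inside one group: replacing the agents by half a unit of mass at the group's
median and half a unit at `c` can only increase the excess of `f` over `7/2` times the distance
to `c`. -/
lemma group_average_le (G : Multiset ℝ) (hG : 0 < Multiset.card G) (f : ℝ → ℝ)
    (hf : ∀ z z', f z ≤ f z' + |z - z'|) (c : ℝ) :
    1 / (Multiset.card G : ℝ) * (G.map f).sum ≤
      7 / 2 * (1 / (Multiset.card G : ℝ) * (G.map fun z => |z - c|).sum) +
        (f c + f (kthLeftmost G ((Multiset.card G + 1) / 2)) -
          7 / 2 * |kthLeftmost G ((Multiset.card G + 1) / 2) - c|) / 2 := by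
  have key := sum_map_le_of_median G hG (fun z => f z - 7 / 2 * |z - c|)
    (f (kthLeftmost G ((Multiset.card G + 1) / 2)) -
      7 / 2 * |kthLeftmost G ((Multiset.card G + 1) / 2) - c|) (f c)
  set r := kthLeftmost G ((Multiset.card G + 1) / 2)
  have hQ : ∀ z, f z - 7 / 2 * |z - c| ≤ f c := fun z => by
    linarith [hf z c, abs_nonneg (z - c)]
  specialize key (hQ r) hQ
  have hside : (∀ z ≤ r, f z - 7 / 2 * |z - c| ≤ f r - 7 / 2 * |r - c|) ∨
      (∀ z ≥ r, f z - 7 / 2 * |z - c| ≤ f r - 7 / 2 * |r - c|) := by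
    rcases le_total r c with h | h
    · left
      intro z hz
      have := hf z r
      rw [abs_of_nonpos (by linarith)] at this ⊢
      rw [abs_of_nonpos (by linarith)]
      linarith
    · right
      intro z hz
      have := hf z r
      rw [abs_of_nonneg (by linarith)] at this ⊢
      rw [abs_of_nonneg (by linarith)]
      linarith
  specialize key hside
  rw [Multiset.sum_map_sub, Multiset.sum_map_mul_left] at key
  have hn : (0 : ℝ) < Multiset.card G := by exact_mod_cast hG
  have h2 := mul_le_mul_of_nonneg_left key (one_div_nonneg.2 hn.le)
  rw [← mul_assoc, one_div_mul_cancel hn.ne'] at h2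
  linarith

/-- The inequality between representatives, with the median representative `w₁` and the
remaining representatives split into equally many on each side of it. -/
lemma representatives_sum_nonpos (A B : Multiset ℝ) (k : ℕ) (hk : 1 ≤ k)
    (hA : Multiset.card A = k) (hB : Multiset.card B = k) (w₁ w₂ c : ℝ)
    (hAw : ∀ a ∈ A, a ≤ w₁) (hBw : ∀ b ∈ B, w₁ ≤ b)
    (hmin : ∀ z ∈ A + B, |w₂ - w₁| ≤ |z - w₁|) :
    ((A + w₁ ::ₘ B).map fun r => max |c - w₁| |c - w₂| + max |r - w₁| |r - w₂| -
      7 / 2 * |r - c|).sum ≤ 0 := by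
  set δ := |w₂ - w₁| with hδ
  set e := |c - w₁| with he
  have hδ0 : 0 ≤ δ := abs_nonneg _
  have he0 : 0 ≤ e := abs_nonneg _
  have hfc : max e |c - w₂| ≤ e + δ := by
    refine max_le (by linarith) ?_
    rw [he, hδ]
    linarith [abs_sub_le c w₁ w₂, abs_sub_comm w₁ w₂]
  set F : ℝ → ℝ := fun r => max e |c - w₂| + max |r - w₁| |r - w₂| - 7 / 2 * |r - c| with hF
  have hF1 : F w₁ ≤ 2 * δ - 5 / 2 * e := by
    have h1 : max |w₁ - w₁| |w₁ - w₂| ≤ δ := by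
      rw [sub_self, abs_zero, abs_sub_comm]
      exact max_le hδ0 le_rfl
    have h2 : |w₁ - c| = e := abs_sub_comm _ _
    simp only [hF, h2]
    linarith
  have hA' : ∀ a ∈ A, a ≤ w₁ - δ := fun a ha => by
    have := hmin a (Multiset.mem_add.2 (Or.inl ha))
    rw [abs_of_nonpos (by linarith [hAw a ha])] at this
    linarith
  have hB' : ∀ b ∈ B, w₁ + δ ≤ b := fun b hb => by
    have := hmin b (Multiset.mem_add.2 (Or.inr hb))
    rw [abs_of_nonneg (by linarith [hBw b hb])] at this
    linarith
  have hw2 : w₁ - δ ≤ w₂ ∧ w₂ ≤ w₁ + δ := by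
    constructor <;> linarith [neg_abs_le (w₂ - w₁), le_abs_self (w₂ - w₁)]
  have hw2' : w₂ = w₁ + δ ∨ w₂ = w₁ - δ := by
    rcases abs_choice (w₂ - w₁) with h | h
    · left; linarith
    · right; linarith
  have hfA : ∀ a ∈ A, max |a - w₁| |a - w₂| ≤ w₁ - a + (δ + (w₂ - w₁)) / 2 := fun a ha => by
    have h := hA' a ha
    rw [abs_of_nonpos (by linarith), abs_of_nonpos (by linarith [hw2.1])]
    rcases hw2' with h' | h' <;> rw [h'] <;> exact max_le (by linarith) (by linarith)
  have hfB : ∀ b ∈ B, max |b - w₁| |b - w₂| ≤ b - w₁ + (δ - (w₂ - w₁)) / 2 := fun b hb => by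
    have h := hB' b hb
    rw [abs_of_nonneg (by linarith), abs_of_nonneg (by linarith [hw2.2])]
    rcases hw2' with h' | h' <;> rw [h'] <;> exact max_le (by linarith) (by linarith)
  obtain ⟨P, Q, hAP, hBQ, hPQ1⟩ : ∃ P Q : ℝ, (∀ a ∈ A, F a ≤ P) ∧ (∀ b ∈ B, F b ≤ Q) ∧
      P + Q ≤ 0 ∧ P + Q + (2 * δ - 5 / 2 * e) ≤ 0 := by
    rcases le_total e δ with h | h
    · refine ⟨e + δ + (δ + (w₂ - w₁)) / 2 - 5 / 2 * δ - 7 / 2 * (c - w₁),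
        e + δ + (δ - (w₂ - w₁)) / 2 - 5 / 2 * δ + 7 / 2 * (c - w₁), ?_, ?_, ?_, ?_⟩
      · intro a ha
        simp only [hF]
        linarith [hfA a ha, hA' a ha, neg_le_abs (a - c)]
      · intro b hb
        simp only [hF]
        linarith [hfB b hb, hB' b hb, le_abs_self (b - c)]
      · linarith
      · linarith
    · rcases le_total w₁ c with hc | hc
      · have hec : e = c - w₁ := abs_of_nonneg (by linarith)
        refine ⟨e + δ + (δ + (w₂ - w₁)) / 2 - 5 / 2 * δ - 7 / 2 * e,
          e + δ + (δ - (w₂ - w₁)) / 2 + e, ?_, ?_, ?_, ?_⟩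
        · intro a ha
          simp only [hF]
          linarith [hfA a ha, hA' a ha, neg_le_abs (a - c)]
        · intro b hb
          simp only [hF]
          linarith [hfB b hb, hB' b hb, le_abs_self (b - c), abs_nonneg (b - c)]
        · linarith
        · linarith
      · have hec : e = -(c - w₁) := abs_of_nonpos (by linarith)
        refine ⟨e + δ + (δ + (w₂ - w₁)) / 2 + e,
          e + δ + (δ - (w₂ - w₁)) / 2 - 5 / 2 * δ - 7 / 2 * e, ?_, ?_, ?_, ?_⟩
        · intro a ha
          simp only [hF]
          linarith [hfA a ha, hA' a ha, neg_le_abs (a - c), abs_nonneg (a - c)]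
        · intro b hb
          simp only [hF]
          linarith [hfB b hb, hB' b hb, le_abs_self (b - c)]
        · linarith
        · linarith
  have hsA := sum_map_le_card_mul A F P hAP
  have hsB := sum_map_le_card_mul B F Q hBQ
  rw [hA] at hsA
  rw [hB] at hsB
  have hk' : (1 : ℝ) ≤ k := by exact_mod_cast hk
  rw [Multiset.map_add, Multiset.map_cons, Multiset.sum_add, Multiset.sum_cons]
  nlinarith [mul_nonneg (sub_nonneg.2 hk') (neg_nonneg.2 hPQ1.1)]

/-- The second selected facility is a closest one among the remaining representatives. -/
lemma argmin_sort_getD_le (T : Multiset ℝ) (f : ℝ → ℝ) (z : ℝ) (hz : z ∈ T) :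
    f (((T.sort (· ≤ ·)).argmin f).getD 0) ≤ f z := by
  have hz' : z ∈ T.sort (· ≤ ·) := (Multiset.mem_sort _).2 hz
  cases h : (T.sort (· ≤ ·)).argmin f with
  | none => simp [List.argmin_eq_none.1 h] at hz'
  | some a => exact List.le_of_mem_argmin hz' h

lemma maxCost_two_s14 (z : ℝ) (w : Fin 2 → ℝ) : maxCost 2 z w = max |z - w 0| |z - w 1| := by
  apply le_antisymm
  · exact ciSup_le fun i => by fin_cases i <;> simp
  · exact max_le (le_ciSup (f := fun i => |z - w i|) (Set.finite_range _).bddAbove 0)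
      (le_ciSup (f := fun i => |z - w i|) (Set.finite_range _).bddAbove 1)

/-- In the max-variant with two facilities, for every odd number `m` of groups, the
algorithm `A✶_max` has approximation ratio at most `7/2`. -/
theorem stmt14 (m : ℕ) (hmodd : Odd m)
    (S : FLSetting 2 m) (x : Fin S.n → ℝ) (y : Fin 2 → ℝ) (hy : Feasible S x y) :
    SC (maxCost 2) S x (outcome AmaxAlg S x) ≤ (7 / 2) * SC (maxCost 2) S x y := by
  obtain ⟨k, rfl⟩ := hmodd
  have hk : 1 ≤ k := by have := S.hmk; omega
  set w := outcome AmaxAlg S x with hw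
  set R := repsMS AmaxAlg S x with hR
  set c := y 0
  have hRcard : Multiset.card R = 2 * k + 1 := by simp [hR, repsMS]
  obtain ⟨A, B, hRAB, hA, hAw, hBw⟩ := exists_split_kthLeftmost R k (by omega)
  have hw0 : w 0 = kthLeftmost R (k + 1) := by
    have : (2 * k + 1 + 1) / 2 = k + 1 := by omega
    rw [← this]
    rfl
  have hw1 : w 1 = (((R.erase (w 0)).sort (· ≤ ·)).argmin (fun z => |z - w 0|)).getD 0 := rfl
  rw [← hw0] at hRAB hAw hBw
  have herase : R.erase (w 0) = A + B := by
    rw [hRAB, Multiset.add_cons, Multiset.erase_cons_head]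
  have hB : Multiset.card B = k := by
    have := congrArg Multiset.card hRAB
    simp only [Multiset.card_add, Multiset.card_cons] at this
    omega
  have hmin : ∀ z ∈ A + B, |w 1 - w 0| ≤ |z - w 0| := fun z hz => by
    rw [hw1, herase]
    exact argmin_sort_getD_le _ (fun z => |z - w 0|) z hz
  have hreps := representatives_sum_nonpos A B k hk hA hB (w 0) (w 1) c hAw hBw hmin
  rw [← hRAB] at hreps
  set f : ℝ → ℝ := fun z => max |z - w 0| |z - w 1|
  have hlip : ∀ z z', f z ≤ f z' + |z - z'| := fun z z' => by
    refine max_le ?_ ?_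
    · linarith [abs_sub_le z z' (w 0), le_max_left |z' - w 0| |z' - w 1|]
    · linarith [abs_sub_le z z' (w 1), le_max_right |z' - w 0| |z' - w 1|]
  let rep : Fin (2 * k + 1) → ℝ := fun j => AmaxAlg.rep (2 * k + 1) (groupMS S x j)
  have hrepsum : ∑ j, (f c + f (rep j) - 7 / 2 * |rep j - c|) ≤ 0 := by
    have h : (R.map fun r => f c + f r - 7 / 2 * |r - c|).sum =
        ∑ j, (f c + f (rep j) - 7 / 2 * |rep j - c|) := by
      rw [hR, repsMS, Multiset.map_map]
      rfl
    exact h ▸ hreps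
  have hsum : ∀ (j : Fin (2 * k + 1)) (g : ℝ → ℝ),
      ∑ i ∈ Finset.univ.filter (fun i => S.grp i = j), g (x i) =
        ((groupMS S x j).map g).sum := fun j g => by
    rw [groupMS, Multiset.map_map]
    rfl
  have hsize : ∀ j, groupSize S j = Multiset.card (groupMS S x j) := fun j => by
    rw [groupMS, Multiset.card_map]
    rfl
  have hpos : ∀ j, 0 < Multiset.card (groupMS S x j) := fun j => by
    obtain ⟨i, hi⟩ := S.surj j
    rw [← hsize, groupSize]
    exact Finset.card_pos.2 ⟨i, by simp [hi]⟩
  have hgroup : ∀ j : Fin (2 * k + 1),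
      1 / (groupSize S j : ℝ) *
          ∑ i ∈ Finset.univ.filter (fun i => S.grp i = j), maxCost 2 (x i) w ≤
        7 / 2 * (1 / (groupSize S j : ℝ) *
          ∑ i ∈ Finset.univ.filter (fun i => S.grp i = j), maxCost 2 (x i) y) +
          (f c + f (rep j) - 7 / 2 * |rep j - c|) / 2 := fun j => by
    have h1 := group_average_le (groupMS S x j) (hpos j) f hlip c
    have h2 : ∑ i ∈ Finset.univ.filter (fun i => S.grp i = j), |x i - c| ≤
        ∑ i ∈ Finset.univ.filter (fun i => S.grp i = j), maxCost 2 (x i) y :=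
      Finset.sum_le_sum fun i _ => by
        rw [maxCost_two_s14]
        exact le_max_left _ _
    have h3 := mul_le_mul_of_nonneg_left h2
      (one_div_nonneg.2 (Nat.cast_nonneg (α := ℝ) (groupSize S j)))
    rw [← hsum j f, ← hsum j fun z => |z - c|, ← hsize] at h1
    simp only [maxCost_two_s14 _ w]
    simp only [rep, AmaxAlg, ← hsize]
    linarith
  have htotal := Finset.sum_le_sum fun j (_ : j ∈ Finset.univ) => hgroup j
  rw [Finset.sum_add_distrib, ← Finset.mul_sum, ← Finset.sum_div] at htotal
  unfold SC
  rw [mul_left_comm]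
  exact mul_le_mul_of_nonneg_left (by linarith) (by positivity)

end
end
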